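/- Assume each ℓ_i is differentiable with β-Lipschitz gradient (individual β-smoothness, β > 0) and the bounded variance condition (A1) holds with constant σ ≥ 0. Fix a batch size b ≥ 1, step sizes 0 ≤ γ ≤ 1/β and 0 ≤ ρ ≤ 1/(4β), and a point w ∈ ℝ^d. For a batch J ∈ {1,…,n}^b define the m-SAM step (same batch in ascent and descent) w⁺(J) = w − γ∇L_J(w + ρ∇L_J(w)). Then, averaging uniformly over all batches J, E_J L(w⁺(J)) ≤ L(w) − (3γ/8)·‖∇L(w)‖² + γβ(σ²/b)(γ + 2ρ²β). -/

import Mathlib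

open scoped RealInnerProductSpace

/-- The full (training) loss `L(w) = (1/n) ∑ᵢ ℓᵢ(w)`. -/
noncomputable def fullLoss {d n : ℕ} (ℓ : Fin n → EuclideanSpace ℝ (Fin d) → ℝ)
    (w : EuclideanSpace ℝ (Fin d)) : ℝ :=
  (n : ℝ)⁻¹ * ∑ i, ℓ i w

/-- The full gradient `∇L(w) = (1/n) ∑ᵢ ∇ℓᵢ(w)` (given per-example gradients `g i`). -/
noncomputable def fullGrad {d n : ℕ}
    (g : Fin n → EuclideanSpace ℝ (Fin d) → EuclideanSpace ℝ (Fin d))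
    (w : EuclideanSpace ℝ (Fin d)) : EuclideanSpace ℝ (Fin d) :=
  (n : ℝ)⁻¹ • ∑ i, g i w

/-- The mini-batch gradient `∇L_J(w) = (1/b) ∑_{k<b} ∇ℓ_{J k}(w)` for a batch
`J : Fin b → Fin n` (sampling with replacement). -/
noncomputable def batchGrad {d n b : ℕ}
    (g : Fin n → EuclideanSpace ℝ (Fin d) → EuclideanSpace ℝ (Fin d))
    (J : Fin b → Fin n) (w : EuclideanSpace ℝ (Fin d)) : EuclideanSpace ℝ (Fin d) :=
  (b : ℝ)⁻¹ • ∑ k, g (J k) w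

/-!
The descent lemma bounds the loss along one step by the inner product of the gradient `G` with the
perturbed batch gradient plus `β / 2` times its squared norm. Write that batch gradient as
`G + u + e`, where `u` is the sampling noise at `w` and `e` the effect of the ascent step, so that
`‖e‖ ≤ β |ρ| ‖G + u‖`. Completing the square in `G + e` and using Young's inequality on `⟪e, u⟫`
leaves only `‖G‖²`, `‖u‖²` and `⟪G, u⟫`. Thus the correlation between ascent and descent never has
to be computed: the cross term averages to zero, and `‖u‖²` averages to the variance divided by the
batch size.
-/

open scoped BigOperators NNReal

section Mean

variable {ι E : Type*} [Fintype ι] [NormedAddCommGroup E] [InnerProductSpace ℝ E]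

/-- The average of a finite family of vectors. Scalar averages are written with `Finset.expect`,
which is not available here because a real vector space has no canonical `ℚ≥0`-module instance. -/
noncomputable def mean (x : ι → E) : E :=
  (Fintype.card ι : ℝ)⁻¹ • ∑ i, x i

theorem inner_mean (v : E) (x : ι → E) : ⟪v, mean x⟫ = 𝔼 i, ⟪v, x i⟫ := by
  rw [mean, real_inner_smul_right, inner_sum, Fintype.expect_eq_sum_div_card, inv_mul_eq_div]

theorem norm_mean_le (x : ι → E) : ‖mean x‖ ≤ 𝔼 i, ‖x i‖ := by
  rw [mean, norm_smul, norm_inv, Real.norm_natCast, Fintype.expect_eq_sum_div_card,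
    inv_mul_eq_div]
  gcongr
  exact norm_sum_le _ _

theorem mean_sub (x y : ι → E) : mean (fun i => x i - y i) = mean x - mean y := by
  simp only [mean, Finset.sum_sub_distrib, smul_sub]

theorem mean_const [Nonempty ι] (a : E) : mean (fun _ : ι => a) = a := by
  simp [mean, ← Nat.cast_smul_eq_nsmul ℝ, smul_smul]

theorem norm_mean_sq (x : ι → E) : ‖mean x‖ ^ 2 = 𝔼 i, 𝔼 j, ⟪x i, x j⟫ := by
  simp only [← inner_mean, real_inner_comm (mean x), ← real_inner_self_eq_norm_sq]

theorem lipschitzWith_mean [Nonempty ι] {β : ℝ≥0} {g : ι → E → E}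
    (hg : ∀ i, LipschitzWith β (g i)) : LipschitzWith β fun x => mean fun i => g i x := by
  refine LipschitzWith.of_dist_le_mul fun x y => ?_
  rw [dist_eq_norm, ← mean_sub]
  calc ‖mean fun i => g i x - g i y‖
      ≤ 𝔼 i, ‖g i x - g i y‖ := norm_mean_le _
    _ ≤ 𝔼 _i : ι, β * dist x y :=
        Finset.expect_le_expect fun i _ => by simpa only [dist_eq_norm] using (hg i).dist_le_mul x y
    _ = β * dist x y := Fintype.expect_const _

theorem hasGradientAt_expect [CompleteSpace E] {f : ι → E → ℝ} {f' : ι → E} {x : E}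
    (hf : ∀ i, HasGradientAt (f i) (f' i) x) :
    HasGradientAt (fun y => 𝔼 i, f i y) (mean f') x := by
  simp only [Fintype.expect_eq_sum_div_card, div_eq_inv_mul]
  rw [hasGradientAt_iff_hasFDerivAt, mean, map_smul, map_sum]
  exact (HasFDerivAt.fun_sum fun i _ => (hf i).hasFDerivAt).const_mul _

end Mean

section Sampling

variable {ι κ E : Type*} [Fintype ι] [Nonempty ι] [Fintype κ] [DecidableEq κ]
  [NormedAddCommGroup E] [InnerProductSpace ℝ E]

-- Resampling one coordinate leaves a uniform batch uniform: this is where independence enters.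
theorem expect_expect_update (k : κ) (F : (κ → ι) → ℝ) :
    𝔼 J : κ → ι, 𝔼 i, F (Function.update J k i) = 𝔼 J, F J := by
  have swap_involutive : Function.Involutive
      fun p : (κ → ι) × ι => (Function.update p.1 k p.2, p.1 k) := fun p => by simp
  calc 𝔼 J : κ → ι, 𝔼 i, F (Function.update J k i)
      = 𝔼 p : (κ → ι) × ι, F (Function.update p.1 k p.2) :=
        (Finset.expect_product' _ _ fun J i => F (Function.update J k i)).symm
    _ = 𝔼 p : (κ → ι) × ι, F p.1 :=
        Fintype.expect_equiv swap_involutive.toPerm _ _ fun _ => rfl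
    _ = 𝔼 J : κ → ι, 𝔼 _i : ι, F J := Finset.expect_product' _ _ fun J _ => F J
    _ = 𝔼 J, F J := by simp only [Fintype.expect_const]

theorem expect_eval (k : κ) (f : ι → ℝ) : 𝔼 J : κ → ι, f (J k) = 𝔼 i, f i := by
  rw [← expect_expect_update k]
  simp only [Function.update_self, Fintype.expect_const]

theorem mean_batchMean [Nonempty κ] (x : ι → E) :
    mean (fun J : κ → ι => mean fun k => x (J k)) = mean x := by
  refine ext_inner_left ℝ fun v => ?_
  simp only [inner_mean]
  rw [Finset.expect_comm]
  simp only [expect_eval _ fun i => ⟪v, x i⟫, Fintype.expect_const]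

theorem expect_inner_eval_of_ne {ξ : ι → E} (hξ : mean ξ = 0) {k l : κ} (hkl : k ≠ l) :
    𝔼 J : κ → ι, ⟪ξ (J k), ξ (J l)⟫ = 0 := by
  rw [← expect_expect_update l]
  simp only [Function.update_self, Function.update_of_ne hkl, ← inner_mean, hξ, inner_zero_right,
    Finset.expect_const_zero]

theorem expect_norm_batchMean_sq [Nonempty κ] {ξ : ι → E} (hξ : mean ξ = 0) :
    𝔼 J : κ → ι, ‖mean fun k => ξ (J k)‖ ^ 2 = (𝔼 i, ‖ξ i‖ ^ 2) / Fintype.card κ := by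
  have expect_inner (k l : κ) :
      𝔼 J : κ → ι, ⟪ξ (J k), ξ (J l)⟫ = if k = l then 𝔼 i, ‖ξ i‖ ^ 2 else 0 := by
    split_ifs with hkl
    · simp only [hkl, real_inner_self_eq_norm_sq, expect_eval l fun i => ‖ξ i‖ ^ 2]
    · exact expect_inner_eval_of_ne hξ hkl
  calc 𝔼 J : κ → ι, ‖mean fun k => ξ (J k)‖ ^ 2
      = 𝔼 J : κ → ι, 𝔼 k, 𝔼 l, ⟪ξ (J k), ξ (J l)⟫ := by simp only [norm_mean_sq]
    _ = 𝔼 k, 𝔼 l, 𝔼 J : κ → ι, ⟪ξ (J k), ξ (J l)⟫ := by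
        rw [Finset.expect_comm]
        exact Finset.expect_congr rfl fun k _ => Finset.expect_comm _ _ _
    _ = (𝔼 i, ‖ξ i‖ ^ 2) / Fintype.card κ := by
        simp only [expect_inner, Fintype.expect_ite_eq]
        rw [Fintype.expect_const, NNRat.smul_def, NNRat.cast_inv, NNRat.cast_natCast,
          inv_mul_eq_div]

theorem expect_norm_batchMean_sub_mean_sq [Nonempty κ] (x : ι → E) :
    𝔼 J : κ → ι, ‖(mean fun k => x (J k)) - mean x‖ ^ 2 =
      (𝔼 i, ‖x i - mean x‖ ^ 2) / Fintype.card κ := by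
  have hcentered : mean (fun i => x i - mean x) = 0 := by rw [mean_sub, mean_const, sub_self]
  rw [← expect_norm_batchMean_sq hcentered]
  simp only [mean_sub, mean_const]

end Sampling

section Descent

variable {E : Type*} [NormedAddCommGroup E] [InnerProductSpace ℝ E]

theorem neg_inner_add_half_mul_norm_sq_le {a r : ℝ} (ha0 : 0 ≤ a) (ha1 : a ≤ 1) {G u e : E}
    (he : ‖e‖ ^ 2 ≤ r * ‖G + u‖ ^ 2) (hr : 0 ≤ r) :
    -⟪G, G + u + e⟫ + a / 2 * ‖G + u + e‖ ^ 2 ≤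
      -(1 / 2 - r) * ‖G‖ ^ 2 - (1 - a - (1 + a) * r) * ⟪G, u⟫ + (a + r) * ‖u‖ ^ 2 := by
  have hyoung : 2 * ⟪u, e⟫ ≤ ‖u‖ ^ 2 + ‖e‖ ^ 2 := by
    linarith [norm_sub_sq_real u e, sq_nonneg ‖u - e‖]
  calc -⟪G, G + u + e⟫ + a / 2 * ‖G + u + e‖ ^ 2
      = -(1 / 2) * ‖G‖ ^ 2 - (1 - a) / 2 * ‖G + e‖ ^ 2 + 1 / 2 * ‖e‖ ^ 2
          - (1 - a) * ⟪G, u⟫ + a / 2 * (2 * ⟪u, e⟫) + a / 2 * ‖u‖ ^ 2 := by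
        simp only [norm_add_sq_real, inner_add_left, inner_add_right, real_inner_self_eq_norm_sq]
        ring
    _ ≤ -(1 / 2) * ‖G‖ ^ 2 - 0 + 1 / 2 * ‖e‖ ^ 2
          - (1 - a) * ⟪G, u⟫ + a / 2 * (‖u‖ ^ 2 + ‖e‖ ^ 2) + a / 2 * ‖u‖ ^ 2 := by
        have : 0 ≤ 1 - a := sub_nonneg.2 ha1
        gcongr
        positivity
    _ = -(1 / 2) * ‖G‖ ^ 2 - (1 - a) * ⟪G, u⟫ + a * ‖u‖ ^ 2 + (1 + a) / 2 * ‖e‖ ^ 2 := by ring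
    _ ≤ -(1 / 2) * ‖G‖ ^ 2 - (1 - a) * ⟪G, u⟫ + a * ‖u‖ ^ 2
          + (1 + a) / 2 * (r * ‖G + u‖ ^ 2) := by gcongr
    _ = -(1 / 2 - (1 + a) / 2 * r) * ‖G‖ ^ 2 - (1 - a - (1 + a) * r) * ⟪G, u⟫
          + (a + (1 + a) / 2 * r) * ‖u‖ ^ 2 := by
        rw [norm_add_sq_real]
        ring
    _ ≤ -(1 / 2 - r) * ‖G‖ ^ 2 - (1 - a - (1 + a) * r) * ⟪G, u⟫ + (a + r) * ‖u‖ ^ 2 := by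
        have : (1 + a) / 2 * r ≤ r := mul_le_of_le_one_left hr (by linarith)
        gcongr

/-- One step of sharpness-aware minimization with gradient oracle `F`: move by `ρ` along `F w`, then
descend from `w` by `γ` along the oracle's value at the perturbed point. -/
def samStep (F : E → E) (γ ρ : ℝ) (w : E) : E :=
  w - γ • F (w + ρ • F w)

variable [CompleteSpace E]

theorem le_add_inner_add_of_lipschitzWith_gradient {f : E → ℝ} {f' : E → E}
    (hf : ∀ x, HasGradientAt f (f' x) x) {β : ℝ≥0} (hf' : LipschitzWith β f') (x v : E) :
    f (x + v) ≤ f x + ⟪f' x, v⟫ + β / 2 * ‖v‖ ^ 2 := by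
  have hline (t : ℝ) : HasDerivAt (fun t : ℝ => f (x + t • v)) ⟪f' (x + t • v), v⟫ t := by
    have hpath : HasDerivAt (fun t : ℝ => x + t • v) v t := by
      simpa using ((hasDerivAt_id t).smul_const v).const_add x
    simpa [Function.comp_def] using (hf (x + t • v)).hasFDerivAt.comp_hasDerivAt t hpath
  have hparabola (t : ℝ) : HasDerivAt (fun t : ℝ => f x + t * ⟪f' x, v⟫ + t ^ 2 * (β / 2 * ‖v‖ ^ 2))
      (⟪f' x, v⟫ + t * (β * ‖v‖ ^ 2)) t := by
    refine ((((hasDerivAt_id' t).mul_const ⟪f' x, v⟫).const_add (f x)).fun_add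
      ((hasDerivAt_pow 2 t).mul_const (β / 2 * ‖v‖ ^ 2))).congr_deriv ?_
    push_cast
    ring
  have hderiv (t : ℝ) (ht : 0 ≤ t) :
      ⟪f' (x + t • v), v⟫ ≤ ⟪f' x, v⟫ + t * (β * ‖v‖ ^ 2) := by
    have hdist : ‖f' (x + t • v) - f' x‖ ≤ β * (t * ‖v‖) := by
      simpa [norm_smul, abs_of_nonneg ht] using hf'.norm_sub_le (x + t • v) x
    have hinner : ⟪f' (x + t • v) - f' x, v⟫ ≤ β * (t * ‖v‖) * ‖v‖ :=
      (real_inner_le_norm _ _).trans (by gcongr)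
    rw [inner_sub_left] at hinner
    linarith
  have := image_le_of_deriv_right_le_deriv_boundary (a := 0) (b := 1)
    (fun t _ => (hline t).continuousAt.continuousWithinAt)
    (fun t _ => (hline t).hasDerivWithinAt) (by simp)
    (fun t _ => (hparabola t).continuousAt.continuousWithinAt)
    (fun t _ => (hparabola t).hasDerivWithinAt) (fun t ht => hderiv t ht.1)
    (Set.right_mem_Icc.2 zero_le_one)
  simpa using this

variable {L : E → ℝ} {G : E → E} {β : ℝ≥0} {γ : ℝ}

theorem loss_samStep_le (hL : ∀ x, HasGradientAt L (G x) x) (hG : LipschitzWith β G) {F : E → E}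
    (hF : LipschitzWith β F) (hγ : 0 ≤ γ) (hγβ : γ * β ≤ 1) (ρ : ℝ) (w : E) :
    L (samStep F γ ρ w) ≤
      L w - γ * (1 / 2 - (β * ρ) ^ 2) * ‖G w‖ ^ 2
        - γ * (1 - γ * β - (1 + γ * β) * (β * ρ) ^ 2) * ⟪G w, F w - G w⟫
        + γ * β * (γ + ρ ^ 2 * β) * ‖F w - G w‖ ^ 2 := by
  set e := F (w + ρ • F w) - F w
  have he : ‖e‖ ^ 2 ≤ (β * ρ) ^ 2 * ‖G w + (F w - G w)‖ ^ 2 := by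
    have hnorm : ‖e‖ ≤ β * (|ρ| * ‖F w‖) := by
      simpa [norm_smul] using hF.norm_sub_le (w + ρ • F w) w
    calc ‖e‖ ^ 2 ≤ (β * (|ρ| * ‖F w‖)) ^ 2 := by gcongr
      _ = (β * ρ) ^ 2 * ‖G w + (F w - G w)‖ ^ 2 := by
        simp only [add_sub_cancel, mul_pow, sq_abs, mul_assoc]
  have hgrad : F (w + ρ • F w) = G w + (F w - G w) + e := by simp [e]
  have hstep := neg_inner_add_half_mul_norm_sq_le (by positivity) hγβ he (sq_nonneg _)
  rw [← hgrad] at hstep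
  calc L (samStep F γ ρ w)
      ≤ L w + γ * (-⟪G w, F (w + ρ • F w)⟫ + γ * β / 2 * ‖F (w + ρ • F w)‖ ^ 2) := by
        have hdescent :=
          le_add_inner_add_of_lipschitzWith_gradient hL hG w (-(γ • F (w + ρ • F w)))
        rw [← sub_eq_add_neg, ← samStep, inner_neg_right, real_inner_smul_right, norm_neg,
          norm_smul, mul_pow, Real.norm_eq_abs, sq_abs] at hdescent
        linarith
    _ ≤ _ := by linarith [mul_le_mul_of_nonneg_left hstep hγ]

theorem expect_loss_samStep_le {Ω : Type*} [Fintype Ω] [Nonempty Ω]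
    (hL : ∀ x, HasGradientAt L (G x) x) (hG : LipschitzWith β G) {F : Ω → E → E}
    (hF : ∀ ω, LipschitzWith β (F ω)) {w : E}
    (hmean : mean (fun ω => F ω w) = G w) (hγ : 0 ≤ γ) (hγβ : γ * β ≤ 1) (ρ : ℝ) :
    𝔼 ω, L (samStep (F ω) γ ρ w) ≤
      L w - γ * (1 / 2 - (β * ρ) ^ 2) * ‖G w‖ ^ 2
        + γ * β * (γ + ρ ^ 2 * β) * 𝔼 ω, ‖F ω w - G w‖ ^ 2 := by
  have hcross : 𝔼 ω, ⟪G w, F ω w - G w⟫ = 0 := by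
    rw [← inner_mean, mean_sub, mean_const, hmean, sub_self, inner_zero_right]
  refine (Finset.expect_le_expect fun ω _ => loss_samStep_le hL hG (hF ω) hγ hγβ ρ w).trans_eq ?_
  rw [Finset.expect_add_distrib, Finset.expect_sub_distrib, Fintype.expect_const,
    ← Finset.mul_expect, ← Finset.mul_expect, hcross, mul_zero, sub_zero]

theorem msam_stochastic_descent_general {ι κ : Type*} [Fintype ι] [Nonempty ι] [Fintype κ]
    [DecidableEq κ] [Nonempty κ] {ℓ : ι → E → ℝ} {g : ι → E → E}
    (hg : ∀ i x, HasGradientAt (ℓ i) (g i x) x) (hLip : ∀ i, LipschitzWith β (g i)) {σ : ℝ} {w : E}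
    (hvar : 𝔼 i, ‖g i w - mean fun j => g j w‖ ^ 2 ≤ σ ^ 2)
    (hγ : 0 ≤ γ) (hγβ : γ * β ≤ 1) (ρ : ℝ) :
    𝔼 J : κ → ι, 𝔼 i, ℓ i (samStep (fun x => mean fun k => g (J k) x) γ ρ w) ≤
      𝔼 i, ℓ i w - γ * (1 / 2 - (β * ρ) ^ 2) * ‖mean fun i => g i w‖ ^ 2
        + γ * β * (σ ^ 2 / Fintype.card κ) * (γ + ρ ^ 2 * β) := by
  have hstep := expect_loss_samStep_le (fun x => hasGradientAt_expect fun i => hg i x)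
    (lipschitzWith_mean hLip) (fun J : κ → ι => lipschitzWith_mean fun k => hLip (J k))
    (mean_batchMean fun i => g i w) hγ hγβ ρ
  rw [expect_norm_batchMean_sub_mean_sq fun i => g i w] at hstep
  refine hstep.trans ?_
  rw [mul_right_comm _ (σ ^ 2 / _)]
  gcongr

end Descent

/-- Expected descent for one stochastic m-SAM step (same batch in ascent
and descent): under individual `β`-smoothness, (A1), `0 ≤ γ ≤ 1/β` and `0 ≤ ρ ≤ 1/(4β)`,
averaging uniformly over all batches `J`,
`E_J L(w − γ∇L_J(w + ρ∇L_J(w))) ≤ L(w) − (3γ/8)‖∇L(w)‖² + γβ(σ²/b)(γ + 2ρ²β)`. -/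
theorem msam_stochastic_descent {d n b : ℕ} (hn : 0 < n) (hb : 1 ≤ b)
    (ℓ : Fin n → EuclideanSpace ℝ (Fin d) → ℝ)
    (g : Fin n → EuclideanSpace ℝ (Fin d) → EuclideanSpace ℝ (Fin d))
    (hg : ∀ i x, HasGradientAt (ℓ i) (g i x) x)
    (β : ℝ) (hβ : 0 < β) (hLip : ∀ i, LipschitzWith β.toNNReal (g i))
    (σ : ℝ) (hσ : 0 ≤ σ)
    (hvar : ∀ x, (n : ℝ)⁻¹ * ∑ i, ‖g i x - fullGrad g x‖ ^ 2 ≤ σ ^ 2)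
    (γ ρ : ℝ) (hγ0 : 0 ≤ γ) (hγ1 : γ ≤ 1 / β) (hρ0 : 0 ≤ ρ) (hρ1 : ρ ≤ 1 / (4 * β))
    (w : EuclideanSpace ℝ (Fin d)) :
    ((n : ℝ) ^ b)⁻¹ *
        ∑ J : Fin b → Fin n,
          fullLoss ℓ (w - γ • batchGrad g J (w + ρ • batchGrad g J w)) ≤
      fullLoss ℓ w - 3 * γ / 8 * ‖fullGrad g w‖ ^ 2 +
        γ * β * (σ ^ 2 / b) * (γ + 2 * ρ ^ 2 * β) := by
  have : Nonempty (Fin n) := ⟨0, hn⟩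
  have : Nonempty (Fin b) := ⟨0, hb⟩
  have hβ' : (β.toNNReal : ℝ) = β := Real.coe_toNNReal β hβ.le
  have hβρ : (β * ρ) ^ 2 ≤ 1 / 8 := by
    have : β * ρ ≤ 1 / 4 := by
      rw [le_div_iff₀ (by positivity)] at hρ1
      linarith
    nlinarith [mul_nonneg hβ.le hρ0]
  calc
    _ ≤ fullLoss ℓ w - γ * (1 / 2 - (β * ρ) ^ 2) * ‖fullGrad g w‖ ^ 2
          + γ * β * (σ ^ 2 / b) * (γ + ρ ^ 2 * β) := by
        have hsharp := msam_stochastic_descent_general (κ := Fin b) (σ := σ) hg hLip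
          (by simpa [mean, fullGrad, Fintype.expect_eq_sum_div_card, inv_mul_eq_div] using hvar w)
          hγ0 (by rwa [hβ', ← le_div_iff₀ hβ]) ρ
        simpa [fullLoss, fullGrad, batchGrad, mean, samStep, Fintype.expect_eq_sum_div_card,
          inv_mul_eq_div, hβ'] using hsharp
    _ ≤ fullLoss ℓ w - γ * (3 / 8) * ‖fullGrad g w‖ ^ 2
          + γ * β * (σ ^ 2 / b) * (γ + 2 * ρ ^ 2 * β) := by
        gcongr <;> nlinarith [sq_nonneg ρ]
    _ = _ := by ring
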